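/- arXiv:nlin/0512074 — 2 statements merged into one kernel-verified Lean document; each statement's English description precedes it below -/
import Mathlib

section
/- Let Θ ∈ R satisfy the generating heavenly equation D^2(z)Θ_x − D^1(z)Θ_y − {D^1(z)Θ, D^2(z)Θ} = 0 coefficientwise in powers of z^{−1}. Then Θ satisfies the second heavenly equation Θ_{ty} − Θ_{t̃x} − (Θ_{xy})^2 + Θ_{xx}Θ_{yy} = 0, where ∂_t := ∂^1_1 and ∂_t̃ := ∂^2_1. More precisely, the coefficient of z^{−2} on the left-hand side of the generating equation equals −(Θ_{ty} − Θ_{t̃x} − (Θ_{xy})^2 + Θ_{xx}Θ_{yy}). -/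
/-!
Common setup for the second heavenly equation hierarchy (Bogdanov–Konopelchenko).

Formal series in `z` with `z`-exponents bounded above are encoded as Hahn series
over `ℤ` in the variable `w = z⁻¹`: the coefficient at `n : ℤ` of `A : LS R` is
the coefficient of `z^{-n}` of the corresponding series.
-/

noncomputable section

/-- Series in `z` with `z`-exponents bounded above (the coefficient at `n : ℤ`
is the coefficient of `z^{-n}`). -/
abbrev LS (R : Type*) [CommRing R] : Type _ := HahnSeries ℤ R

/-- The variable `z`. -/
def zz {R : Type*} [CommRing R] : LS R := HahnSeries.single (-1 : ℤ) (1 : R)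

/-- Constant series. -/
def CC {R : Type*} [CommRing R] (r : R) : LS R := HahnSeries.C r

/-- `tail g = Σ_{k≥0} (g k) · z^{-(k+1)}` : a series in negative powers of `z`. -/
def tail {R : Type*} [CommRing R] (g : ℕ → R) : LS R :=
  HahnSeries.single (1 : ℤ) (1 : R) * HahnSeries.ofPowerSeries ℤ R (PowerSeries.mk g)

/-- `geom v = 1/(z - v) := Σ_{k≥0} v^k z^{-(k+1)}`. -/
def geom {R : Type*} [CommRing R] (v : R) : LS R := tail fun k => v ^ k

/-- The projection `(·)_-` keeping only negative powers of `z`. -/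
def truncMinus {R : Type*} [CommRing R] (A : LS R) : LS R where
  coeff n := if 1 ≤ n then A.coeff n else 0
  isPWO_support' := A.isPWO_support'.mono (fun n hn => by
    by_cases h : (1:ℤ) ≤ n <;> simp_all [Function.mem_support])

/-- The projection `(·)_+` keeping only nonnegative powers of `z`. -/
def truncPlus {R : Type*} [CommRing R] (A : LS R) : LS R where
  coeff n := if n ≤ 0 then A.coeff n else 0
  isPWO_support' := A.isPWO_support'.mono (fun n hn => by
    by_cases h : n ≤ (0:ℤ) <;> simp_all [Function.mem_support])

/-- A commutative ring equipped with pairwise commuting derivations `∂^{j+1}_n`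
(`j : Fin 2`, `n : ℕ`) and distinguished elements `t^{j+1}_n` satisfying
`∂^j_m t^k_n = δ_{jk} δ_{mn}`. -/
structure HeavenlySetting (R : Type*) [CommRing R] where
  d : Fin 2 → ℕ → R → R
  d_add : ∀ j n a b, d j n (a + b) = d j n a + d j n b
  d_mul : ∀ j n a b, d j n (a * b) = a * d j n b + d j n a * b
  d_comm : ∀ j n k m a, d j n (d k m a) = d k m (d j n a)
  t : Fin 2 → ℕ → R
  d_t : ∀ j n k m, d j n (t k m) = if j = k ∧ n = m then 1 else 0

/-- The data of a Lax–Sato pair: `Sneg j n` is the coefficient `S^{j+1}_{n+1}`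
of `z^{-(n+1)}` in `S^{j+1} = Σ_{n≥0} t^{j+1}_n z^n + Σ_{n≥1} S^{j+1}_n z^{-n}`. -/
structure LaxPair (R : Type*) [CommRing R] where
  Sneg : Fin 2 → ℕ → R

namespace HeavenlySetting

variable {R : Type*} [CommRing R] (H : HeavenlySetting R) (P : LaxPair R)

/-- The coefficient of `z^n` in `S^{j+1}`. -/
def coeffS (j : Fin 2) (n : ℤ) : R :=
  if 0 ≤ n then H.t j n.toNat else P.Sneg j (-n - 1).toNat

/-- The series `∂^{a+1}_m S^{j+1}` (its `z`-exponents are bounded above since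
`∂^{a+1}_m t^{j+1}_n = δ_{aj} δ_{mn}`). -/
def dS (a : Fin 2) (m : ℕ) (j : Fin 2) : LS R :=
  HahnSeries.single (-(m : ℤ)) (if a = j then 1 else 0)
    + tail fun k => H.d a m (P.Sneg j k)

/-- `S^{j+1}_x = ∂^1_0 S^{j+1}`. -/
def Sx (j : Fin 2) : LS R := H.dS P 0 0 j

/-- `S^{j+1}_y = ∂^2_0 S^{j+1}`. -/
def Sy (j : Fin 2) : LS R := H.dS P 1 0 j

/-- The condition `(dS^1 ∧ dS^2)_- = 0`. -/
def WedgeMinusZero : Prop :=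
  ∀ a b : Fin 2, ∀ m n : ℕ,
    truncMinus (H.dS P a m 0 * H.dS P b n 1 - H.dS P b n 0 * H.dS P a m 1) = 0

/-- The Lax–Sato equations `∂^1_n S^j = -{(z^n S^2)_+, S^j}`,
`∂^2_n S^j = {(z^n S^1)_+, S^j}` together with the bracket `{S^1,S^2} = 1`;
here `{f,g} = f_x g_y - f_y g_x` and `((z^n S^k)_+)_x = (z^n (S^k)_x)_+` etc. -/
def LaxSatoEqs : Prop :=
  (∀ n : ℕ, ∀ j : Fin 2,
    H.dS P 0 n j =
      -(truncPlus (zz ^ n * H.Sx P 1) * H.Sy P j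
        - truncPlus (zz ^ n * H.Sy P 1) * H.Sx P j)) ∧
  (∀ n : ℕ, ∀ j : Fin 2,
    H.dS P 1 n j =
      truncPlus (zz ^ n * H.Sx P 0) * H.Sy P j
        - truncPlus (zz ^ n * H.Sy P 0) * H.Sx P j) ∧
  (H.Sx P 0 * H.Sy P 1 - H.Sy P 0 * H.Sx P 1 = 1)

/-- Coefficient of `z'^k` in `D^{a+1}(z') S^{j+1}(z) = Σ_{m≥0} z'^{-m-1} ∂^{a+1}_m S^{j+1}(z)`. -/
def Dc (a j : Fin 2) (k : ℤ) : LS R :=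
  if k ≤ -1 then H.dS P a (-k - 1).toNat j else 0

/-- Generating Lax–Sato equations
`(z'-z) D^1(z') S^j(z) = -{S^2(z'), S^j(z)}` and
`(z'-z) D^2(z') S^j(z) = {S^1(z'), S^j(z)}`, stated coefficientwise in `z'`
(`k : ℤ` being the `z'`-exponent; both sides of each equation are series in `z`). -/
def GenLaxSato : Prop :=
  (∀ j : Fin 2, ∀ k : ℤ,
    H.Dc P 0 j (k - 1) - zz * H.Dc P 0 j k =
      -(CC (H.d 0 0 (H.coeffS P 1 k)) * H.Sy P j
        - CC (H.d 1 0 (H.coeffS P 1 k)) * H.Sx P j)) ∧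
  (∀ j : Fin 2, ∀ k : ℤ,
    H.Dc P 1 j (k - 1) - zz * H.Dc P 1 j k =
      CC (H.d 0 0 (H.coeffS P 0 k)) * H.Sy P j
        - CC (H.d 1 0 (H.coeffS P 0 k)) * H.Sx P j)

/-- `Θ` is a τ-function for the pair: `S^1_{n+1} = -∂^2_n Θ`, `S^2_{n+1} = ∂^1_n Θ`. -/
def IsTau (Θ : R) : Prop :=
  ∀ n : ℕ, P.Sneg 0 n = -H.d 1 n Θ ∧ P.Sneg 1 n = H.d 0 n Θ

/-- `σ` is a wave function with constant parameter `p`: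
`(z-p) D^1(z)σ = -{S^2(z), σ}` and `(z-p) D^2(z)σ = {S^1(z), σ}`,
coefficientwise in `z^{-1}`, with `p` annihilated by all derivations. -/
def IsWave (σ p : R) : Prop :=
  (∀ a : Fin 2, ∀ n : ℕ, H.d a n p = 0) ∧
  ((zz - CC p) * tail (fun n => H.d 0 n σ) =
    -(H.Sx P 1 * CC (H.d 1 0 σ) - H.Sy P 1 * CC (H.d 0 0 σ))) ∧
  ((zz - CC p) * tail (fun n => H.d 1 n σ) =
    H.Sx P 0 * CC (H.d 1 0 σ) - H.Sy P 0 * CC (H.d 0 0 σ))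

end HeavenlySetting

open Finset.HasAntidiagonal (antidiagonal)

section Tail

variable {R : Type*} [CommRing R] (g h : ℕ → R) (n : ℕ)

theorem coeff_tail_add_one : (tail g).coeff (n + 1) = g n := by
  rw [tail, HahnSeries.coeff_single_mul_add, one_mul, HahnSeries.ofPowerSeries_apply_coeff,
    PowerSeries.coeff_mk]

theorem coeff_tail_add_two : (tail g).coeff (n + 2) = g (n + 1) := by
  simpa only [Nat.cast_add, Nat.cast_one, add_assoc, one_add_one_eq_two]
    using coeff_tail_add_one g (n + 1)

theorem tail_mul_tail :
    tail g * tail h = HahnSeries.single (2 : ℤ) (1 : R) *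
      HahnSeries.ofPowerSeries ℤ R (PowerSeries.mk g * PowerSeries.mk h) := by
  rw [tail, tail, mul_mul_mul_comm, HahnSeries.single_mul_single, one_mul, ← map_mul,
    one_add_one_eq_two]

theorem coeff_tail_mul_tail_add_two :
    (tail g * tail h).coeff (n + 2) = ∑ p ∈ antidiagonal n, g p.1 * h p.2 := by
  rw [tail_mul_tail, HahnSeries.coeff_single_mul_add, one_mul,
    HahnSeries.ofPowerSeries_apply_coeff, PowerSeries.coeff_mul]
  simp only [PowerSeries.coeff_mk]

end Tail

namespace HeavenlySetting

variable {R : Type*} [CommRing R] (H : HeavenlySetting R) (Θ : R)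

/-- The Poisson bracket `{f, g} = f_x g_y - f_y g_x`. -/
def poissonBracket (f g : R) : R :=
  H.d 0 0 f * H.d 1 0 g - H.d 1 0 f * H.d 0 0 g

/-- The left-hand side `D²(z)Θ_x - D¹(z)Θ_y - {D¹(z)Θ, D²(z)Θ}` of the generating heavenly
equation, with `∂_x` and `∂_y` in the bracket applied to series coefficientwise in `z`. -/
def generatingHeavenlyLHS : LS R :=
  tail (fun n => H.d 1 n (H.d 0 0 Θ)) - tail (fun n => H.d 0 n (H.d 1 0 Θ))
    - (tail (fun n => H.d 0 0 (H.d 0 n Θ)) * tail (fun n => H.d 1 0 (H.d 1 n Θ))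
       - tail (fun n => H.d 1 0 (H.d 0 n Θ)) * tail (fun n => H.d 0 0 (H.d 1 n Θ)))

/-- The left-hand side `Θ_{ty} - Θ_{t̃x} - Θ_{xy}² + Θ_{xx}Θ_{yy}` of the second heavenly
equation, where `∂_t = ∂¹₁` and `∂_t̃ = ∂²₁`. -/
def secondHeavenlyLHS : R :=
  H.d 0 1 (H.d 1 0 Θ) - H.d 1 1 (H.d 0 0 Θ)
    - (H.d 0 0 (H.d 1 0 Θ)) ^ 2 + H.d 0 0 (H.d 0 0 Θ) * H.d 1 0 (H.d 1 0 Θ)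

theorem coeff_generatingHeavenlyLHS_add_two (n : ℕ) :
    (H.generatingHeavenlyLHS Θ).coeff (n + 2) =
      H.d 1 (n + 1) (H.d 0 0 Θ) - H.d 0 (n + 1) (H.d 1 0 Θ)
        - ∑ p ∈ antidiagonal n, H.poissonBracket (H.d 0 p.1 Θ) (H.d 1 p.2 Θ) := by
  simp only [generatingHeavenlyLHS, poissonBracket, HahnSeries.coeff_sub, coeff_tail_add_two,
    coeff_tail_mul_tail_add_two, Finset.sum_sub_distrib]

theorem poissonBracket_d_zero_d_zero :
    H.poissonBracket (H.d 0 0 Θ) (H.d 1 0 Θ) =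
      H.d 0 0 (H.d 0 0 Θ) * H.d 1 0 (H.d 1 0 Θ) - (H.d 0 0 (H.d 1 0 Θ)) ^ 2 := by
  rw [poissonBracket, H.d_comm 1 0 0 0, sq]

end HeavenlySetting

theorem heavenly_second_heavenly_equation_general {R : Type*} [CommRing R]
    (H : HeavenlySetting R) (Θ : R) :
    (H.generatingHeavenlyLHS Θ).coeff 2 = -H.secondHeavenlyLHS Θ := by
  have hcoeff := H.coeff_generatingHeavenlyLHS_add_two Θ 0
  rw [Nat.cast_zero, zero_add, Finset.Nat.antidiagonal_zero, Finset.sum_singleton,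
    H.poissonBracket_d_zero_d_zero] at hcoeff
  rw [hcoeff, HeavenlySetting.secondHeavenlyLHS]
  ring

/-- If `Θ` satisfies the generating heavenly equation, then it
satisfies the second heavenly equation `Θ_{ty} - Θ_{t̃x} - Θ_{xy}² + Θ_{xx}Θ_{yy} = 0`;
more precisely, the coefficient of `z^{-2}` of the left-hand side of the generating
equation equals `-(Θ_{ty} - Θ_{t̃x} - Θ_{xy}² + Θ_{xx}Θ_{yy})`. -/
theorem heavenly_second_heavenly_equation {R : Type*} [CommRing R]
    (H : HeavenlySetting R) (Θ : R)
    (hgen : tail (fun n => H.d 1 n (H.d 0 0 Θ)) - tail (fun n => H.d 0 n (H.d 1 0 Θ))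
      - (tail (fun n => H.d 0 0 (H.d 0 n Θ)) * tail (fun n => H.d 1 0 (H.d 1 n Θ))
         - tail (fun n => H.d 1 0 (H.d 0 n Θ)) * tail (fun n => H.d 0 0 (H.d 1 n Θ))) = 0) :
    (tail (fun n => H.d 1 n (H.d 0 0 Θ)) - tail (fun n => H.d 0 n (H.d 1 0 Θ))
      - (tail (fun n => H.d 0 0 (H.d 0 n Θ)) * tail (fun n => H.d 1 0 (H.d 1 n Θ))
         - tail (fun n => H.d 1 0 (H.d 0 n Θ)) * tail (fun n => H.d 0 0 (H.d 1 n Θ)))).coeff 2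
      = -(H.d 0 1 (H.d 1 0 Θ) - H.d 1 1 (H.d 0 0 Θ)
          - (H.d 0 0 (H.d 1 0 Θ)) ^ 2 + H.d 0 0 (H.d 0 0 Θ) * H.d 1 0 (H.d 1 0 Θ))
    ∧ H.d 0 1 (H.d 1 0 Θ) - H.d 1 1 (H.d 0 0 Θ)
        - (H.d 0 0 (H.d 1 0 Θ)) ^ 2 + H.d 0 0 (H.d 0 0 Θ) * H.d 1 0 (H.d 1 0 Θ) = 0 := by
  have hcoeff := heavenly_second_heavenly_equation_general H Θ
  exact ⟨hcoeff, neg_eq_zero.mp (hcoeff.symm.trans (congrArg (HahnSeries.coeff · 2) hgen))⟩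
end
end

section
/- Let (S^1,S^2) be a Lax–Sato pair. Then (S^1,S^2) satisfies the generating Lax–Sato equations (z′−z) D^1(z′) S^j(z) = −{S^2(z′), S^j(z)} and (z′−z) D^2(z′) S^j(z) = {S^1(z′), S^j(z)} (j = 1,2), coefficientwise in z′, if and only if (S^1,S^2) satisfies the Lax–Sato equations ∂^1_n S^j = −{(z^n S^2)_+, S^j} and ∂^2_n S^j = {(z^n S^1)_+, S^j} for all n ≥ 0 and j = 1,2 together with {S^1,S^2} = 1. -/
/-!
Common setup for the second heavenly equation hierarchy (Bogdanov–Konopelchenko).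

Formal series in `z` with `z`-exponents bounded above are encoded as Hahn series
over `ℤ` in the variable `w = z⁻¹`: the coefficient at `n : ℤ` of `A : LS R` is
the coefficient of `z^{-n}` of the corresponding series.
-/

noncomputable section

/-!
Comparing coefficients of `z'^{-n-1}` in the first generating equation gives
`∂^1_{n+1} S^j - z ∂^1_n S^j = -{S^2_{n+1}, S^j}`, comparing those of `z'^0` gives the flow `n = 0`,
and those of positive powers of `z'` vanish. Since `(z^{n+1} S^2)_+ = z (z^n S^2)_+ + S^2_{n+1}`,
the brackets `-{(z^n S^2)_+, S^j}` obey the same recursion with the same initial value, so the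
generating equation is equivalent to the flows. The second one is handled in the same way.

The bracket condition follows from the flows alone: as `S^1_x` and `S^1_y` contain no positive
powers of `z`, the constant term of `{(z^n S^2)_+, S^1}` is the coefficient of `z^{-n}` in
`{S^2, S^1}`, and the flow `∂^1_n S^1 = -{(z^n S^2)_+, S^1}` identifies it with
`-∂^1_n t^1_0 = -δ_{n0}`.
-/

theorem forall_eq_iff_zero_and_succ_sub {A : Type*} [AddGroup A] (f : A → A) (u v : ℕ → A) :
    (∀ n, u n = v n) ↔ u 0 = v 0 ∧ ∀ n, u (n + 1) - f (u n) = v (n + 1) - f (v n) := by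
  refine ⟨fun h => ⟨h 0, fun n => by rw [h, h]⟩, fun ⟨h_zero, h_succ⟩ n => ?_⟩
  induction n with
  | zero => exact h_zero
  | succ n ih => exact sub_left_injective (by simpa only [ih] using h_succ n)

section Series

variable {R : Type*} [CommRing R]

theorem coeff_CC (r : R) (m : ℤ) : (CC r).coeff m = if m = 0 then r else 0 := by
  by_cases hm : m = 0 <;> simp [CC, hm]

theorem coeff_zz_mul (A : LS R) (m : ℤ) : (zz * A).coeff m = A.coeff (m + 1) := by
  rw [zz, HahnSeries.coeff_single_mul, one_mul, sub_neg_eq_add]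

theorem coeff_zz_pow_mul (n : ℕ) (A : LS R) (m : ℤ) :
    (zz ^ n * A).coeff m = A.coeff (m + n) := by
  rw [zz, HahnSeries.single_pow, HahnSeries.coeff_single_mul]
  simp

theorem coeff_tail (g : ℕ → R) (m : ℤ) :
    (tail g).coeff m = if 0 < m then g (m - 1).toNat else 0 := by
  rw [tail, HahnSeries.coeff_single_mul, one_mul, PowerSeries.coeff_coe, PowerSeries.coeff_mk]
  split_ifs
  · omega
  · rfl
  · congr 1
    omega
  · omega

theorem coeff_truncPlus (A : LS R) (m : ℤ) :
    (truncPlus A).coeff m = if m ≤ 0 then A.coeff m else 0 := rfl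

theorem truncPlus_zz_mul (A : LS R) :
    truncPlus (zz * A) = zz * truncPlus A + CC (A.coeff 1) := by
  ext m
  rw [HahnSeries.coeff_add, coeff_zz_mul, coeff_truncPlus, coeff_truncPlus, coeff_zz_mul, coeff_CC]
  rcases lt_trichotomy m 0 with hm | rfl | hm
  · simp [hm.le, hm.ne, show m + 1 ≤ 0 by omega]
  · simp
  · simp [hm.not_ge, hm.ne', show ¬ m + 1 ≤ 0 by omega]

theorem truncPlus_eq_CC {A : LS R} (hA : 0 ≤ A.orderTop) : truncPlus A = CC (A.coeff 0) := by
  ext m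
  rw [coeff_truncPlus, coeff_CC]
  rcases lt_trichotomy m 0 with hm | rfl | hm
  · simp [hm.ne, HahnSeries.coeff_eq_zero_of_lt_orderTop (hA.trans_lt' (WithTop.coe_lt_coe.2 hm))]
  · simp
  · simp [hm.not_ge, hm.ne']

theorem one_le_orderTop_sub_truncPlus (A : LS R) : 1 ≤ (A - truncPlus A).orderTop := by
  refine HahnSeries.le_orderTop_iff_forall.2 fun m hm => ?_
  have hm : m < 1 := WithTop.coe_lt_coe.1 hm
  rw [HahnSeries.coeff_sub, coeff_truncPlus, if_pos (by omega), sub_self]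

theorem coeff_truncPlus_mul (A : LS R) {X : LS R} (hX : 0 ≤ X.orderTop) {m : ℤ} (hm : m ≤ 0) :
    (truncPlus A * X).coeff m = (A * X).coeff m := by
  have h_order : 1 ≤ ((A - truncPlus A) * X).orderTop :=
    (add_le_add (one_le_orderTop_sub_truncPlus A) hX).trans HahnSeries.orderTop_add_le_mul
  have h_coeff : ((A - truncPlus A) * X).coeff m = 0 :=
    HahnSeries.coeff_eq_zero_of_lt_orderTop
      (h_order.trans_lt' (WithTop.coe_lt_coe.2 (Int.lt_add_one_of_le hm)))
  rw [sub_mul, HahnSeries.coeff_sub] at h_coeff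
  exact (sub_eq_zero.1 h_coeff).symm

end Series

namespace HeavenlySetting

variable {R : Type*} [CommRing R] (H : HeavenlySetting R) (P : LaxPair R)

theorem coeff_dS (a : Fin 2) (m : ℕ) (j : Fin 2) (i : ℤ) :
    (H.dS P a m j).coeff i = H.d a m (H.coeffS P j (-i)) := by
  rw [dS, HahnSeries.coeff_add, HahnSeries.coeff_single, coeff_tail, coeffS]
  rcases le_or_gt i 0 with hi | hi
  · have h_index : i = -(m : ℤ) ↔ m = (-i).toNat := by omega
    rw [if_neg hi.not_gt, if_pos (neg_nonneg.2 hi), H.d_t, add_zero, ← ite_and]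
    simp only [h_index, and_comm]
  · rw [if_neg (by omega), if_pos hi, if_neg (by omega), neg_neg, zero_add]

theorem zero_le_orderTop_dS_zero (a j : Fin 2) : 0 ≤ (H.dS P a 0 j).orderTop := by
  refine HahnSeries.le_orderTop_iff_forall.2 fun i hi => ?_
  have hi : i < 0 := WithTop.coe_lt_coe.1 hi
  rw [coeff_dS, coeffS, if_pos (by omega), H.d_t, if_neg (by omega)]

/-- The bracket `{S^{k+1}, S^{j+1}}`. -/
def bracketS (k j : Fin 2) : LS R :=
  H.Sx P k * H.Sy P j - H.Sy P k * H.Sx P j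

/-- The bracket `{(z^n S^{k+1})_+, S^{j+1}}`, the Hamiltonian side of the `n`-th flow. -/
def truncBracket (k : Fin 2) (n : ℕ) (j : Fin 2) : LS R :=
  truncPlus (zz ^ n * H.Sx P k) * H.Sy P j - truncPlus (zz ^ n * H.Sy P k) * H.Sx P j

/-- The coefficient of `z'^i` in `{S^{k+1}(z'), S^{j+1}(z)}`. -/
def genBracket (k : Fin 2) (i : ℤ) (j : Fin 2) : LS R :=
  CC (H.d 0 0 (H.coeffS P k i)) * H.Sy P j - CC (H.d 1 0 (H.coeffS P k i)) * H.Sx P j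

theorem bracketS_swap (k j : Fin 2) : H.bracketS P j k = -H.bracketS P k j := by
  rw [bracketS, bracketS]
  ring

theorem coeff_bracketS_of_neg (k j : Fin 2) {m : ℤ} (hm : m < 0) :
    (H.bracketS P k j).coeff m = 0 := by
  have h_mul (a b : Fin 2) : (H.dS P a 0 k * H.dS P b 0 j).coeff m = 0 :=
    HahnSeries.coeff_eq_zero_of_lt_orderTop <| (WithTop.coe_lt_coe.2 hm).trans_le <|
      (add_nonneg (H.zero_le_orderTop_dS_zero P a k) (H.zero_le_orderTop_dS_zero P b j)).trans
        HahnSeries.orderTop_add_le_mul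
  rw [bracketS, HahnSeries.coeff_sub, Sx, Sy, Sy, Sx, h_mul, h_mul, sub_zero]

theorem coeff_zero_truncBracket (k : Fin 2) (n : ℕ) (j : Fin 2) :
    (H.truncBracket P k n j).coeff 0 = (H.bracketS P k j).coeff n := by
  rw [truncBracket, bracketS, Sx, Sx, Sy, Sy, HahnSeries.coeff_sub, HahnSeries.coeff_sub,
    coeff_truncPlus_mul _ (H.zero_le_orderTop_dS_zero P 1 j) le_rfl,
    coeff_truncPlus_mul _ (H.zero_le_orderTop_dS_zero P 0 j) le_rfl,
    mul_assoc, mul_assoc, coeff_zz_pow_mul, coeff_zz_pow_mul, zero_add]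

theorem truncBracket_zero (k j : Fin 2) : H.truncBracket P k 0 j = H.genBracket P k 0 j := by
  have h_trunc (a : Fin 2) : truncPlus (H.dS P a 0 k) = CC (H.d a 0 (H.coeffS P k 0)) := by
    rw [truncPlus_eq_CC (H.zero_le_orderTop_dS_zero P a k), coeff_dS, neg_zero]
  simp only [truncBracket, genBracket, pow_zero, one_mul, Sx, Sy, h_trunc]

theorem truncBracket_succ (k : Fin 2) (n : ℕ) (j : Fin 2) :
    H.truncBracket P k (n + 1) j =
      zz * H.truncBracket P k n j + H.genBracket P k (-(n + 1)) j := by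
  have h_trunc (a : Fin 2) : truncPlus (zz ^ (n + 1) * H.dS P a 0 k) =
      zz * truncPlus (zz ^ n * H.dS P a 0 k) + CC (H.d a 0 (H.coeffS P k (-(n + 1)))) := by
    rw [pow_succ', mul_assoc, truncPlus_zz_mul, coeff_zz_pow_mul, coeff_dS, add_comm (1 : ℤ)]
  simp only [truncBracket, genBracket, Sx, Sy, h_trunc]
  ring

theorem genBracket_of_pos (k : Fin 2) {i : ℤ} (hi : 0 < i) (j : Fin 2) :
    H.genBracket P k i j = 0 := by
  have h_index : 0 ≠ i.toNat := by omega
  simp [genBracket, coeffS, hi.le, H.d_t, h_index, CC]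

theorem Dc_neg_natCast_sub_one (a j : Fin 2) (n : ℕ) :
    H.Dc P a j (-n - 1) = H.dS P a n j := by
  rw [Dc, if_pos (by omega)]
  congr 1
  omega

theorem Dc_of_nonneg (a j : Fin 2) {i : ℤ} (hi : 0 ≤ i) : H.Dc P a j i = 0 :=
  if_neg (by omega)

/-- The hierarchy of flows `∂^{a+1}_n S^{j+1} = ε {(z^n S^{k+1})_+, S^{j+1}}`, `n ≥ 0`; the sign `ε`
lets one statement cover both Lax–Sato families. -/
def LaxFlow (a k : Fin 2) (ε : ℤ) (j : Fin 2) : Prop :=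
  ∀ n : ℕ, H.dS P a n j = ε • H.truncBracket P k n j

/-- The generating equation `(z' - z) D^{a+1}(z') S^{j+1}(z) = ε {S^{k+1}(z'), S^{j+1}(z)}`,
coefficientwise in `z'`. -/
def GenFlow (a k : Fin 2) (ε : ℤ) (j : Fin 2) : Prop :=
  ∀ i : ℤ, H.Dc P a j (i - 1) - zz * H.Dc P a j i = ε • H.genBracket P k i j

theorem genLaxSato_iff :
    H.GenLaxSato P ↔ (∀ j, H.GenFlow P 0 1 (-1) j) ∧ ∀ j, H.GenFlow P 1 0 1 j := by
  simp only [GenLaxSato, GenFlow, genBracket, neg_smul, one_smul]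

theorem laxSatoEqs_iff :
    H.LaxSatoEqs P ↔
      ((∀ j, H.LaxFlow P 0 1 (-1) j) ∧ ∀ j, H.LaxFlow P 1 0 1 j) ∧ H.bracketS P 0 1 = 1 := by
  simp only [LaxSatoEqs, LaxFlow, truncBracket, bracketS, neg_smul, one_smul, and_assoc,
    forall_comm (α := ℕ)]

variable {H P} {a k j : Fin 2} {ε : ℤ}

theorem genFlow_iff_zero_and_succ :
    H.GenFlow P a k ε j ↔ H.dS P a 0 j = ε • H.genBracket P k 0 j ∧
      ∀ n : ℕ, H.dS P a (n + 1) j - zz * H.dS P a n j = ε • H.genBracket P k (-(n + 1)) j := by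
  have h_zero : H.Dc P a j (0 - 1) - zz * H.Dc P a j 0 = H.dS P a 0 j := by
    rw [Dc_of_nonneg _ _ _ _ le_rfl, mul_zero, sub_zero]
    exact H.Dc_neg_natCast_sub_one P a j 0
  have h_succ (n : ℕ) : H.Dc P a j (-(n + 1) - 1) - zz * H.Dc P a j (-(n + 1)) =
      H.dS P a (n + 1) j - zz * H.dS P a n j := by
    rw [← Dc_neg_natCast_sub_one, ← Dc_neg_natCast_sub_one, Nat.cast_succ, neg_add']
  refine ⟨fun h => ⟨h_zero ▸ h 0, fun n => h_succ n ▸ h _⟩, fun ⟨h₀, h⟩ i => ?_⟩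
  rcases lt_trichotomy i 0 with hi | rfl | hi
  · obtain ⟨n, rfl⟩ : ∃ n : ℕ, i = -(n + 1) := ⟨(-i - 1).toNat, by omega⟩
    rw [h_succ, h]
  · rw [h_zero, h₀]
  · rw [Dc_of_nonneg _ _ _ _ (by omega), Dc_of_nonneg _ _ _ _ hi.le, genBracket_of_pos _ _ _ hi,
      mul_zero, sub_zero, smul_zero]

theorem genFlow_iff_laxFlow : H.GenFlow P a k ε j ↔ H.LaxFlow P a k ε j := by
  have h_recursion := forall_eq_iff_zero_and_succ_sub (zz * ·) (H.dS P a · j)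
    (ε • H.truncBracket P k · j)
  simp only [truncBracket_zero, truncBracket_succ, smul_add, mul_smul_comm,
    add_sub_cancel_left] at h_recursion
  exact genFlow_iff_zero_and_succ.trans h_recursion.symm

theorem LaxFlow.smul_bracketS (h : H.LaxFlow P a k ε j) :
    ε • H.bracketS P k j = if a = j then 1 else 0 := by
  ext m
  rcases lt_or_ge m 0 with hm | hm
  · rw [HahnSeries.coeff_smul, coeff_bracketS_of_neg _ _ _ _ hm, smul_zero]
    split_ifs <;> simp [HahnSeries.coeff_one, hm.ne]
  · obtain ⟨n, rfl⟩ := Int.eq_ofNat_of_zero_le hm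
    have h_dS : (H.dS P a n j).coeff 0 = if a = j ∧ n = 0 then 1 else 0 := by
      rw [coeff_dS, neg_zero, coeffS, if_pos le_rfl, Int.toNat_zero, H.d_t]
    rw [HahnSeries.coeff_smul, ← coeff_zero_truncBracket, ← HahnSeries.coeff_smul, ← h n, h_dS]
    split_ifs <;> simp_all [HahnSeries.coeff_one]

theorem LaxFlow.bracketS_eq_one (h : H.LaxFlow P 0 1 (-1) 0) : H.bracketS P 0 1 = 1 := by
  simpa [H.bracketS_swap P 1 0] using h.smul_bracketS

end HeavenlySetting

/-- A Lax–Sato pair satisfies the generating Lax–Sato equations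
(coefficientwise in `z'`) iff it satisfies the Lax–Sato equations together with
`{S^1,S^2} = 1`. -/
theorem heavenly_genLaxSato_iff_laxSato {R : Type*} [CommRing R]
    (H : HeavenlySetting R) (P : LaxPair R) :
    H.GenLaxSato P ↔ H.LaxSatoEqs P := by
  rw [H.genLaxSato_iff, H.laxSatoEqs_iff]
  simp only [HeavenlySetting.genFlow_iff_laxFlow]
  exact (and_iff_left_of_imp fun h => (h.1 0).bracketS_eq_one).symm
end
end
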